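/- For every τ in the upper half-plane H and every w ∈ ℂ, the following identity holds: θ₃(w, −1/τ) · θ₃(0, τ) = e^{πiτw²} · θ₃(0, −1/τ) · θ₃(τw, τ). (Equivalently, where the denominators are nonzero, θ₃(w,−1/τ)/θ₃(0,−1/τ) = e^{πiτw²} · θ₃(τw,τ)/θ₃(0,τ).) -/

import Mathlib

/-!
The product `θ₃(v, τ)` equals the series `∑ n : ℤ, e^{2πinv + πin²τ}`, Mathlib's `jacobiTheta₂ v τ`
(the Jacobi triple product, `jTheta3_eq_jacobiTheta₂`). The identity then follows by dividing the
functional equation of `jacobiTheta₂` under `τ ↦ -1/τ` at `z = τ w` by the one at `z = 0`: the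
automorphy factor `(-iτ)^{1/2}` cancels.

The triple product is obtained from its finite form. With `x = e^{πiτ}`, `q = x²`,
`(q)_m = ∏_{j<m} (1 - q^{j+1})`,
`∏_{j<N} (1 + z x^{2j+1})(1 + z⁻¹ x^{2j+1}) = ∑_k (q)_{2N} / ((q)_{N+k} (q)_{N-k}) · z^k x^{k²}`,
where terms with `|k| > N` vanish. This is an induction on `N` (`hasSum_finite_triple`): multiplying
by the next factor amounts to a three-term recurrence for the coefficients. After multiplication
by `(q)_N`, the coefficients are bounded uniformly in `N` and `k` and tend to `1` for each `k`, since
`(q)_m` converges to a nonzero limit; dominated convergence finishes the argument.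
-/

noncomputable section

/-- `qpow τ x = e^{2πiτx}`, so that `qpow τ j = q^j` with `q = e^{2πiτ}`. -/
def qpow (τ x : ℂ) : ℂ := Complex.exp (2 * (Real.pi : ℂ) * Complex.I * τ * x)

/-- Jacobi theta function
`θ(v,τ) = 2 q^{1/8} sin(πv) ∏_{j=1}^∞ (1−q^j)(1−e^{2πiv}q^j)(1−e^{−2πiv}q^j)`. -/
def jTheta (v τ : ℂ) : ℂ :=
  2 * qpow τ (1/8) * Complex.sin ((Real.pi : ℂ) * v) *
    ∏' j : ℕ, ((1 - qpow τ ((j : ℂ) + 1)) *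
      (1 - Complex.exp (2 * (Real.pi : ℂ) * Complex.I * v) * qpow τ ((j : ℂ) + 1)) *
      (1 - Complex.exp (-(2 * (Real.pi : ℂ) * Complex.I * v)) * qpow τ ((j : ℂ) + 1)))

/-- Jacobi theta function
`θ₁(v,τ) = 2 q^{1/8} cos(πv) ∏_{j=1}^∞ (1−q^j)(1+e^{2πiv}q^j)(1+e^{−2πiv}q^j)`. -/
def jTheta1 (v τ : ℂ) : ℂ :=
  2 * qpow τ (1/8) * Complex.cos ((Real.pi : ℂ) * v) *
    ∏' j : ℕ, ((1 - qpow τ ((j : ℂ) + 1)) *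
      (1 + Complex.exp (2 * (Real.pi : ℂ) * Complex.I * v) * qpow τ ((j : ℂ) + 1)) *
      (1 + Complex.exp (-(2 * (Real.pi : ℂ) * Complex.I * v)) * qpow τ ((j : ℂ) + 1)))

/-- Jacobi theta function
`θ₂(v,τ) = ∏_{j=1}^∞ (1−q^j)(1−e^{2πiv}q^{j−1/2})(1−e^{−2πiv}q^{j−1/2})`. -/
def jTheta2 (v τ : ℂ) : ℂ :=
  ∏' j : ℕ, ((1 - qpow τ ((j : ℂ) + 1)) *
    (1 - Complex.exp (2 * (Real.pi : ℂ) * Complex.I * v) * qpow τ ((j : ℂ) + 1/2)) *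
    (1 - Complex.exp (-(2 * (Real.pi : ℂ) * Complex.I * v)) * qpow τ ((j : ℂ) + 1/2)))

/-- Jacobi theta function
`θ₃(v,τ) = ∏_{j=1}^∞ (1−q^j)(1+e^{2πiv}q^{j−1/2})(1+e^{−2πiv}q^{j−1/2})`. -/
def jTheta3 (v τ : ℂ) : ℂ :=
  ∏' j : ℕ, ((1 - qpow τ ((j : ℂ) + 1)) *
    (1 + Complex.exp (2 * (Real.pi : ℂ) * Complex.I * v) * qpow τ ((j : ℂ) + 1/2)) *
    (1 + Complex.exp (-(2 * (Real.pi : ℂ) * Complex.I * v)) * qpow τ ((j : ℂ) + 1/2)))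

/-- `θ'(0,τ) = ∂θ(v,τ)/∂v |_{v=0}`. -/
def jThetaDeriv (τ : ℂ) : ℂ := deriv (fun v => jTheta v τ) 0

end

open Filter Topology

/-- The finite `q`-Pochhammer product `(q)_m = ∏_{j<m} (1 - q^{j+1})`. -/
noncomputable def qPoch (q : ℂ) (m : ℕ) : ℂ := ∏ j ∈ Finset.range m, (1 - q ^ (j + 1))

/-- `1 / (q)_m` for an integer `m`, with the usual convention that it is `0` for `m < 0`. -/
noncomputable def qPochInv (q : ℂ) (m : ℤ) : ℂ := if 0 ≤ m then (qPoch q m.toNat)⁻¹ else 0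

lemma one_sub_pow_ne_zero {q : ℂ} (hq : ‖q‖ < 1) (j : ℕ) : 1 - q ^ (j + 1) ≠ 0 := by
  intro h
  have h1 : ‖q ^ (j + 1)‖ < 1 := by
    rw [norm_pow]
    exact pow_lt_one₀ (norm_nonneg _) hq (by omega)
  rw [← sub_eq_zero.mp h, norm_one] at h1
  exact lt_irrefl _ h1

lemma qPoch_ne_zero {q : ℂ} (hq : ‖q‖ < 1) (m : ℕ) : qPoch q m ≠ 0 :=
  Finset.prod_ne_zero_iff.mpr fun j _ => one_sub_pow_ne_zero hq j

/-- The recurrence for `1 / (q)_m` holds for every integer `m`: at `m = -1` the factor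
`1 - q^0` vanishes. -/
lemma qPochInv_eq {q : ℂ} (hq : ‖q‖ < 1) (m : ℤ) :
    qPochInv q m = qPochInv q (m + 1) * (1 - q ^ (m + 1)) := by
  rcases lt_trichotomy m (-1) with h | rfl | h
  · rw [qPochInv, qPochInv, if_neg (by omega), if_neg (by omega), zero_mul]
  · simp [qPochInv]
  · lift m to ℕ using (by omega)
    have h2 := one_sub_pow_ne_zero hq m
    have h3 := qPoch_ne_zero hq m
    have e : ((m : ℤ) + 1) = ((m + 1 : ℕ) : ℤ) := by push_cast; rfl
    rw [e, zpow_natCast, qPochInv, qPochInv, if_pos (by omega), if_pos (by omega),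
      Int.toNat_natCast, Int.toNat_natCast, show qPoch q (m + 1) = qPoch q m * (1 - q ^ (m + 1))
        from Finset.prod_range_succ _ _]
    field_simp

lemma qPoch_tendsto {q : ℂ} (hq : ‖q‖ < 1) :
    ∃ L : ℂ, L ≠ 0 ∧ Tendsto (qPoch q) atTop (𝓝 L) := by
  have hs : Summable fun j : ℕ => ‖-q ^ (j + 1)‖ := by
    simp only [norm_neg, norm_pow]
    exact (summable_nat_add_iff 1).mpr (summable_geometric_of_lt_one (norm_nonneg _) hq)
  refine ⟨∏' j : ℕ, (1 + -q ^ (j + 1)), tprod_one_add_ne_zero_of_summable ?_ hs, ?_⟩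
  · intro j
    simpa [sub_eq_add_neg] using one_sub_pow_ne_zero hq j
  · have := (multipliable_one_add_of_summable hs).hasProd.tendsto_prod_nat
    simp only [← sub_eq_add_neg] at this ⊢
    exact this

lemma qPochInv_tendsto {q L : ℂ} (hL : L ≠ 0) (h : Tendsto (qPoch q) atTop (𝓝 L)) :
    Tendsto (qPochInv q) atTop (𝓝 L⁻¹) := by
  have h1 : Tendsto Int.toNat atTop atTop :=
    tendsto_atTop.mpr fun b => (eventually_ge_atTop (b : ℤ)).mono fun m hm => by omega
  refine ((h.comp h1).inv₀ hL).congr' ?_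
  filter_upwards [eventually_ge_atTop 0] with m hm
  simp [qPochInv, hm]

lemma qPochInv_bdd {q L : ℂ} (hL : L ≠ 0) (h : Tendsto (qPoch q) atTop (𝓝 L)) :
    ∃ M : ℝ, 0 ≤ M ∧ ∀ m, ‖qPochInv q m‖ ≤ M := by
  obtain ⟨M, hM⟩ := (h.inv₀ hL).norm.bddAbove_range
  have hM' : ∀ n, ‖(qPoch q n)⁻¹‖ ≤ M := fun n => hM ⟨n, rfl⟩
  have h0 : 0 ≤ M := (norm_nonneg _).trans (hM' 0)
  refine ⟨M, h0, fun m => ?_⟩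
  unfold qPochInv
  split_ifs
  · exact hM' _
  · simpa using h0

/-- The finite form of the Jacobi triple product. The sum over `k : ℤ` has finite support. -/
lemma hasSum_finite_triple {x z : ℂ} (hx0 : x ≠ 0) (hx : ‖x ^ 2‖ < 1) (hz : z ≠ 0) (N : ℕ) :
    HasSum (fun k : ℤ => qPoch (x ^ 2) (2 * N) * qPochInv (x ^ 2) (N + k) *
        qPochInv (x ^ 2) (N - k) * (z ^ k * x ^ (k ^ 2)))
      (∏ j ∈ Finset.range N, ((1 + z * x ^ (2 * j + 1)) * (1 + z⁻¹ * x ^ (2 * j + 1)))) := by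
  induction N with
  | zero =>
    convert hasSum_single (0 : ℤ) ?_ using 1
    · simp [qPoch, qPochInv]
    · intro k hk
      rcases lt_or_gt_of_ne hk with h | h
      · simp [qPochInv, h]
      · simp [qPochInv, h]
  | succ N ih =>
    have hp := (Equiv.addRight (1 : ℤ)).hasSum_iff.mpr ih
    have hm := (Equiv.addRight (-1 : ℤ)).hasSum_iff.mpr ih
    rw [Finset.prod_range_succ]
    -- `(1 + z y)(1 + z⁻¹ y) = 1 + y² + z y + z⁻¹ y`
    have h := ((ih.mul_right (1 + (x ^ (2 * N + 1)) ^ 2)).add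
      (hm.mul_right (z * x ^ (2 * N + 1)))).add (hp.mul_right (z⁻¹ * x ^ (2 * N + 1)))
    rw [← mul_add, ← mul_add, show 1 + (x ^ (2 * N + 1)) ^ 2 + z * x ^ (2 * N + 1) +
      z⁻¹ * x ^ (2 * N + 1) = (1 + z * x ^ (2 * N + 1)) * (1 + z⁻¹ * x ^ (2 * N + 1)) by
        field_simp
        ring] at h
    refine (congrArg (HasSum · _) (funext fun k => ?_)).mpr h
    simp only [Function.comp, Equiv.coe_addRight]
    have hq0 : x ^ 2 ≠ 0 := pow_ne_zero _ hx0
    have e1 : ((N + 1 : ℕ) : ℤ) + k = N + k + 1 := by push_cast; ring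
    have e2 : ((N + 1 : ℕ) : ℤ) - k = N - k + 1 := by push_cast; ring
    have e3 : (N : ℤ) + (k + -1) = N + k - 1 := by ring
    have e4 : (N : ℤ) - (k + -1) = N - k + 1 := by ring
    have e5 : (N : ℤ) + (k + 1) = N + k + 1 := by ring
    have e6 : (N : ℤ) - (k + 1) = N - k - 1 := by ring
    have r1 := qPochInv_eq hx (N + k)
    have r2 := qPochInv_eq hx (N - k)
    have r3 := qPochInv_eq hx (N + k - 1)
    have r4 := qPochInv_eq hx (N - k - 1)
    rw [sub_add_cancel] at r3 r4
    have p1 : (x ^ 2) ^ ((N : ℤ) + k + 1) = (x ^ N) ^ 2 * (x ^ k) ^ 2 * x ^ 2 := by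
      rw [zpow_add₀ hq0, zpow_add₀ hq0, zpow_natCast, zpow_one, ← pow_mul, ← pow_mul,
        mul_comm 2 N, ← zpow_natCast (x ^ k), ← zpow_mul, ← zpow_natCast x 2, ← zpow_mul,
        mul_comm k]
    have p2 : (x ^ 2) ^ ((N : ℤ) + k) = (x ^ N) ^ 2 * (x ^ k) ^ 2 := by
      have := zpow_add_one₀ hq0 ((N : ℤ) + k)
      rw [p1] at this
      exact (mul_right_cancel₀ hq0 this).symm
    have p3 : (x ^ 2) ^ ((N : ℤ) - k) = (x ^ N) ^ 2 / (x ^ k) ^ 2 := by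
      rw [zpow_sub₀ hq0, zpow_natCast, ← pow_mul, ← pow_mul,
        mul_comm 2 N, ← zpow_natCast (x ^ k), ← zpow_mul, ← zpow_natCast x 2, ← zpow_mul,
        mul_comm k]
    have p4 : (x ^ 2) ^ ((N : ℤ) - k + 1) = (x ^ N) ^ 2 / (x ^ k) ^ 2 * x ^ 2 := by
      rw [zpow_add_one₀ hq0, p3]
    have s1 : x ^ ((k + 1) ^ 2) = x ^ (k ^ 2) * (x ^ k) ^ 2 * x := by
      rw [show (k + 1) ^ 2 = k ^ 2 + k * 2 + 1 by ring, zpow_add_one₀ hx0, zpow_add₀ hx0,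
        zpow_mul]
      norm_cast
    have s2 : x ^ ((k + -1) ^ 2) = x ^ (k ^ 2) / (x ^ k) ^ 2 * x := by
      rw [show (k + -1) ^ 2 = k ^ 2 - k * 2 + 1 by ring, zpow_add_one₀ hx0, zpow_sub₀ hx0,
        zpow_mul]
      norm_cast
    have s3 : z ^ (k + -1) = z ^ k / z := by
      rw [zpow_add₀ hz, zpow_neg_one, div_eq_mul_inv]
    have d : qPoch (x ^ 2) (2 * (N + 1)) = qPoch (x ^ 2) (2 * N) *
        (1 - (x ^ N) ^ 4 * x ^ 2) * (1 - (x ^ N) ^ 4 * x ^ 4) := by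
      rw [show 2 * (N + 1) = 2 * N + 1 + 1 by ring, qPoch, Finset.prod_range_succ,
        Finset.prod_range_succ, ← qPoch]
      congr 2
      · ring
      · ring
    have y : x ^ (2 * N + 1) = (x ^ N) ^ 2 * x := by ring
    rw [e1, e2, e3, e4, e5, e6, r3, r4, r1, r2, p1, p2, p3, p4, s1, s2, s3, zpow_add_one₀ hz, d, y]
    have hk : x ^ k ≠ 0 := zpow_ne_zero _ hx0
    generalize x ^ k = K at *
    generalize x ^ N = n at *
    field_simp
    ring

/-- The Jacobi triple product. -/
lemma jTheta3_eq_jacobiTheta₂ (v τ : ℂ) (hτ : 0 < τ.im) : jTheta3 v τ = jacobiTheta₂ v τ := by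
  set x : ℂ := Complex.exp (Real.pi * Complex.I * τ) with hxdef
  set z : ℂ := Complex.exp (2 * Real.pi * Complex.I * v) with hzdef
  have hx0 : x ≠ 0 := Complex.exp_ne_zero _
  have hz : z ≠ 0 := Complex.exp_ne_zero _
  have hx1 : ‖x‖ < 1 := by
    rw [hxdef, Complex.norm_exp, Real.exp_lt_one_iff]
    have : (Real.pi * Complex.I * τ : ℂ).re = -(Real.pi * τ.im) := by simp
    rw [this]
    exact neg_neg_of_pos (mul_pos Real.pi_pos hτ)
  have hq : ‖x ^ 2‖ < 1 := by
    rw [norm_pow]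
    exact pow_lt_one₀ (norm_nonneg _) hx1 two_ne_zero
  have q1 (j : ℕ) : qpow τ ((j : ℂ) + 1) = (x ^ 2) ^ (j + 1) := by
    rw [qpow, hxdef, ← pow_mul, ← Complex.exp_nat_mul]
    congr 1; push_cast; ring
  have q2 (j : ℕ) : qpow τ ((j : ℂ) + 1 / 2) = x ^ (2 * j + 1) := by
    rw [qpow, hxdef, ← Complex.exp_nat_mul]
    congr 1; push_cast; ring
  have hterm (k : ℤ) : z ^ k * x ^ (k ^ 2) = jacobiTheta₂_term k v τ := by
    rw [jacobiTheta₂_term, Complex.exp_add, hzdef, hxdef, ← Complex.exp_int_mul,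
      ← Complex.exp_int_mul]
    congr 2 <;> (push_cast; ring)
  have hprod : jTheta3 v τ = ∏' j : ℕ, ((1 + -(x ^ 2) ^ (j + 1)) * (1 + z * x ^ (2 * j + 1)) *
      (1 + z⁻¹ * x ^ (2 * j + 1))) := by
    simp only [jTheta3, q1, q2, Complex.exp_neg, ← hzdef, sub_eq_add_neg]
  have hg : Summable fun j : ℕ => ‖x ^ 2‖ ^ j := summable_geometric_of_lt_one (norm_nonneg _) hq
  have m1 : Multipliable fun j : ℕ => 1 + -(x ^ 2) ^ (j + 1) := by
    refine multipliable_one_add_of_summable ?_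
    simp only [norm_neg]
    exact ((summable_nat_add_iff 1).mpr hg).congr fun j => (norm_pow _ _).symm
  have m2 (c : ℂ) : Multipliable fun j : ℕ => 1 + c * x ^ (2 * j + 1) := by
    refine multipliable_one_add_of_summable ?_
    refine (hg.mul_left (‖c‖ * ‖x‖)).congr fun j => ?_
    rw [norm_mul, norm_pow, norm_pow]
    ring
  have hlim := ((m1.mul (m2 z)).mul (m2 z⁻¹)).hasProd.tendsto_prod_nat
  rw [← hprod] at hlim
  obtain ⟨L, hL, hLt⟩ := qPoch_tendsto hq
  obtain ⟨M, hM0, hM⟩ := qPochInv_bdd hL hLt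
  obtain ⟨B, hB⟩ := hLt.norm.bddAbove_range
  have hB' : ∀ n, ‖qPoch (x ^ 2) n‖ ≤ B := fun n => hB ⟨n, rfl⟩
  have hB0 : 0 ≤ B := (norm_nonneg _).trans (hB' 0)
  have hfin (N : ℕ) : ∏ j ∈ Finset.range N, ((1 + -(x ^ 2) ^ (j + 1)) *
      (1 + z * x ^ (2 * j + 1)) * (1 + z⁻¹ * x ^ (2 * j + 1))) =
      ∑' k : ℤ, qPoch (x ^ 2) N * (qPoch (x ^ 2) (2 * N) * qPochInv (x ^ 2) (N + k) *
        qPochInv (x ^ 2) (N - k) * (z ^ k * x ^ (k ^ 2))) := by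
    rw [((hasSum_finite_triple hx0 hq hz N).mul_left (qPoch (x ^ 2) N)).tsum_eq, qPoch,
      ← Finset.prod_mul_distrib]
    exact Finset.prod_congr rfl fun j _ => by ring
  simp_rw [hfin] at hlim
  refine tendsto_nhds_unique hlim ?_
  rw [jacobiTheta₂]
  refine tendsto_tsum_of_dominated_convergence
    (bound := fun k => B * (B * M * M * ‖jacobiTheta₂_term k v τ‖)) ?_ ?_ ?_
  · exact (((summable_jacobiTheta₂_term_iff v τ).mpr hτ).norm.mul_left _).mul_left _
  · intro k
    have t1 : Tendsto (fun N : ℕ => (N : ℤ) + k) atTop atTop :=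
      tendsto_atTop_add_const_right _ _ tendsto_natCast_atTop_atTop
    have t2 : Tendsto (fun N : ℕ => (N : ℤ) - k) atTop atTop :=
      tendsto_atTop_add_const_right _ _ tendsto_natCast_atTop_atTop
    have t3 : Tendsto (fun N : ℕ => 2 * N) atTop atTop :=
      tendsto_id.const_mul_atTop' two_pos
    have r := qPochInv_tendsto hL hLt
    have := hLt.mul ((((hLt.comp t3).mul (r.comp t1)).mul (r.comp t2)).mul_const
      (jacobiTheta₂_term k v τ))
    have e : L * (L * L⁻¹ * L⁻¹ * jacobiTheta₂_term k v τ) = jacobiTheta₂_term k v τ := by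
      field_simp
    rw [e] at this
    simpa only [Function.comp, hterm] using this
  · refine Eventually.of_forall fun N k => ?_
    rw [hterm, norm_mul, norm_mul, norm_mul, norm_mul]
    gcongr
    · exact hB' _
    · exact hB' _
    · exact hM _
    · exact hM _

theorem theta3_theta3_S_identity (τ : ℂ) (hτ : 0 < τ.im) (w : ℂ) :
    jTheta3 w (-1 / τ) * jTheta3 0 τ =
      Complex.exp ((Real.pi : ℂ) * Complex.I * τ * w ^ 2) * jTheta3 0 (-1 / τ) *
        jTheta3 (τ * w) τ := by
  have hτ0 : τ ≠ 0 := by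
    rintro rfl
    simp at hτ
  have hS : 0 < (-1 / τ).im := by
    rw [neg_div, Complex.neg_im, one_div, Complex.inv_im, neg_div, neg_neg]
    exact div_pos hτ (Complex.normSq_pos.mpr hτ0)
  rw [jTheta3_eq_jacobiTheta₂ _ _ hS, jTheta3_eq_jacobiTheta₂ _ _ hS,
    jTheta3_eq_jacobiTheta₂ _ _ hτ, jTheta3_eq_jacobiTheta₂ _ _ hτ,
    jacobiTheta₂_functional_equation 0 τ, jacobiTheta₂_functional_equation (τ * w) τ,
    mul_div_cancel_left₀ _ hτ0, zero_div]
  have e : Complex.exp ((Real.pi : ℂ) * Complex.I * τ * w ^ 2) *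
      Complex.exp (-Real.pi * Complex.I * (τ * w) ^ 2 / τ) = 1 := by
    rw [← Complex.exp_add, Complex.exp_eq_one_iff]
    exact ⟨0, by field_simp; simp⟩
  have e0 : Complex.exp (-Real.pi * Complex.I * 0 ^ 2 / τ) = 1 := by simp
  rw [e0]
  linear_combination (-(1 / (-Complex.I * τ) ^ (1 / 2 : ℂ) * jacobiTheta₂ 0 (-1 / τ) *
    jacobiTheta₂ w (-1 / τ))) * e
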